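/- Let G be a connected graph with σ_2 ≥ t_{k+1} − λ(k − 1) for some positive integers λ, k. Then t_k ≥ t_{k+1} − λ + 1. (Corollary 5) -/

import Mathlib

open SimpleGraph

variable {V : Type*}

/-- A set of vertices is independent in `G`. -/
def IsIndSet (G : SimpleGraph V) (s : Set V) : Prop :=
  ∀ ⦃u⦄, u ∈ s → ∀ ⦃v⦄, v ∈ s → ¬ G.Adj u v

/-- The number of end-vertices (vertices of degree one) of a subgraph `H`. -/
noncomputable def endVertexCount {G : SimpleGraph V} (H : G.Subgraph) : ℕ :=
  {v : V | v ∈ H.verts ∧ (H.neighborSet v).ncard = 1}.ncard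

/-- `H` is a cycle; a single vertex and a single edge are regarded as
simple cycles of orders 1 and 2, respectively. -/
def IsCycleSubgraph {G : SimpleGraph V} (H : G.Subgraph) : Prop :=
  H.Connected ∧ (H.verts.ncard ≤ 2 ∨ ∀ v ∈ H.verts, (H.neighborSet v).ncard = 2)

/-- `H` is a `k`-ended tree in `G`: a tree with at most `k` end-vertices (leaves);
a cycle is regarded as a 1-ended tree. -/
def IsKEndedTree (G : SimpleGraph V) (k : ℕ) (H : G.Subgraph) : Prop :=
  (H.coe.IsTree ∧ endVertexCount H ≤ k) ∨ (1 ≤ k ∧ IsCycleSubgraph H)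

/-- `t k`: the order of a largest `k`-ended tree in `G`. -/
noncomputable def maxKEndedOrder (G : SimpleGraph V) (k : ℕ) : ℕ :=
  sSup {n | ∃ H : G.Subgraph, IsKEndedTree G k H ∧ H.verts.ncard = n}

/-- `σ m`: the minimum degree sum over independent sets of `m` vertices of `G`,
and `+∞` if the independence number of `G` is less than `m`. -/
noncomputable def minDegreeSum (G : SimpleGraph V) [Fintype V] [DecidableRel G.Adj]
    (m : ℕ) : ℕ∞ :=
  ⨅ s ∈ {s : Finset V | s.card = m ∧ IsIndSet G ↑s}, (∑ v ∈ s, G.degree v : ℕ∞)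

/-! Suppose `t_{k+1} ≥ t_k + l` and take a largest `(k + 1)`-ended tree; it has exactly `k + 1`
ends. This remains so when a subtree is cut off and attached to an end: the vertex it was cut
off from takes over the role of that end. Call the part of the tree from an end up to, but
excluding, the first branching vertex a leg. Deleting a leg loses an end, so every leg has at
least `l` vertices. If an end `u` is adjacent to a vertex `w` on the leg of another end `v`,
then moving the segment from `v` to `w` over to `u` shortens that leg, so at least `l` of its
vertices lie beyond `w`; moving the leg piece by piece shows likewise that no two ends are
adjacent.

Given ends `x` and `y`, root the tree at `x`. The parent of a neighbour `w` of `x` becomes an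
end when the subtree of `w` is moved to `x`, so it is not adjacent to `y` and has no child
besides `w`. Hence the parents of the neighbours of `x`, the neighbours of `y`, and `l` suitable
vertices on each of the other `k - 1` legs are pairwise distinct, and none of them is `y`,
whence `deg x + deg y + l (k - 1) < t_{k+1}`. -/

lemma IsKEndedTree.ncard_verts_le [Finite V] {G : SimpleGraph V} {k : ℕ} {H : G.Subgraph}
    (hH : IsKEndedTree G k H) : H.verts.ncard ≤ maxKEndedOrder G k :=
  le_csSup ⟨Nat.card V, by rintro _ ⟨H', -, rfl⟩; exact Set.ncard_le_card _⟩ ⟨H, hH, rfl⟩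

lemma ncard_verts_le_maxKEndedOrder [Finite V] {G : SimpleGraph V} {k : ℕ} {H : G.Subgraph}
    {X : Set V} (hH : H.coe.IsTree)
    (hX : ∀ v ∈ H.verts, v ∉ X → (H.neighborSet v).Nontrivial) (hk : X.ncard ≤ k) :
    H.verts.ncard ≤ maxKEndedOrder G k := by
  refine IsKEndedTree.ncard_verts_le (.inl ⟨hH, (Set.ncard_le_ncard fun v hv ↦ ?_).trans hk⟩)
  by_contra hvX
  exact (Set.one_lt_ncard_iff_nontrivial.mpr (hX v hv.1 hvX)).ne' hv.2

lemma ncard_support_le_maxKEndedOrder [Finite V] {G : SimpleGraph V} {k : ℕ} {u v : V}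
    (hk : 1 ≤ k) {p : G.Walk u v} (hp : p.IsPath) (hadj : G.Adj v u) :
    {w | w ∈ p.support}.ncard ≤ maxKEndedOrder G k := by
  classical
  by_cases h : s(v, u) ∈ p.edges
  · have hcard : {w | w ∈ p.support}.ncard ≤ 2 := by
      have hlength := hp.length_eq_one_of_mem_edges (Sym2.eq_swap ▸ h)
      rw [← List.coe_toFinset, Set.ncard_coe_finset]
      exact (List.toFinset_card_le _).trans (by rw [Walk.length_support, hlength])
    rw [← p.verts_toSubgraph] at hcard ⊢
    exact IsKEndedTree.ncard_verts_le (.inr ⟨hk, p.toSubgraph_connected, .inl hcard⟩)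
  · have hc : (p.cons hadj).IsCycle := (Walk.cons_isCycle_iff p hadj).mpr ⟨hp, h⟩
    have hverts : (p.cons hadj).toSubgraph.verts = {w | w ∈ p.support} := by
      ext w
      simp only [Walk.mem_verts_toSubgraph, Walk.support_cons, List.mem_cons, Set.mem_ofPred_eq,
        or_iff_right_iff_imp]
      rintro rfl
      exact p.end_mem_support
    rw [← hverts]
    refine IsKEndedTree.ncard_verts_le (.inr ⟨hk, Walk.toSubgraph_connected _, .inr fun w hw ↦ ?_⟩)
    exact hc.ncard_neighborSet_toSubgraph_eq_two ((Walk.mem_verts_toSubgraph _).mp hw)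

lemma exists_adj_dist_lt {G : SimpleGraph V} (hG : G.Connected) {u v : V} (hv : v ≠ u) :
    ∃ w, G.Adj v w ∧ G.dist u w < G.dist u v := by
  obtain ⟨q, hq⟩ := hG.exists_walk_length_eq_dist v u
  cases q with
  | nil => exact absurd rfl hv
  | cons hvw q =>
    refine ⟨_, hvw, ?_⟩
    rw [dist_comm, G.dist_comm (u := u), ← hq, Walk.length_cons]
    exact Nat.lt_succ_of_le (dist_le q)

lemma eq_of_adj_of_dist_lt {G : SimpleGraph V} (hG : G.IsTree) {u v a b : V} (ha : G.Adj v a)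
    (hb : G.Adj v b) (hau : G.dist u a < G.dist u v) (hbu : G.dist u b < G.dist u v) :
    a = b := by
  have exists_isPath {w : V} (hw : G.Adj v w) (hlt : G.dist u w < G.dist u v) :
      ∃ q : G.Walk v u, q.IsPath ∧ q.snd = w := by
    obtain ⟨q, hq⟩ := hG.connected.exists_walk_length_eq_dist w u
    refine ⟨.cons hw q, Walk.isPath_of_length_eq_dist _ (le_antisymm ?_ (dist_le _)), by simp⟩
    rwa [Walk.length_cons, hq, dist_comm, G.dist_comm (u := v)]
  obtain ⟨p, hp, rfl⟩ := exists_isPath ha hau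
  obtain ⟨q, hq, rfl⟩ := exists_isPath hb hbu
  rw [(hG.existsUnique_path v u).unique hp hq]

/-! ### Rooted trees -/

/-- A rooted tree in `G`, encoded by a parent map fixing the root. The rank, strictly decreasing
towards the root, expresses that the parent map has no cycles; values of `parent` outside `verts`
are irrelevant. -/
structure ParentTree (G : SimpleGraph V) where
  verts : Set V
  root : V
  parent : V → V
  root_mem : root ∈ verts
  parent_root : parent root = root
  parent_mem : ∀ v ∈ verts, parent v ∈ verts
  adj_parent : ∀ v ∈ verts, v ≠ root → G.Adj v (parent v)
  exists_rank : ∃ d : V → ℕ, ∀ v ∈ verts, v ≠ root → d (parent v) < d v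

namespace ParentTree

variable {G : SimpleGraph V} {T : ParentTree G} {u v w : V} {i j n : ℕ}

/-- `w` is a child of `v` in the rooted tree `T`. -/
def IsChild (T : ParentTree G) (v w : V) : Prop := w ∈ T.verts ∧ w ≠ T.root ∧ T.parent w = v

/-- `w` is a weak ancestor of `v` in `T`: it lies on the path from `v` to the root. -/
def IsAncestor (T : ParentTree G) (w v : V) : Prop := ∃ i, T.parent^[i] v = w

lemma isChild_parent (hv : v ∈ T.verts) (hvr : v ≠ T.root) : T.IsChild (T.parent v) v :=
  ⟨hv, hvr, rfl⟩

@[elab_as_elim]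
lemma induction_parent {P : ∀ v, v ∈ T.verts → Prop} (root : P T.root T.root_mem)
    (step : ∀ v (hv : v ∈ T.verts), v ≠ T.root → P (T.parent v) (T.parent_mem v hv) → P v hv)
    (hv : v ∈ T.verts) : P v hv := by
  obtain ⟨d, hd⟩ := T.exists_rank
  induction hn : d v using Nat.strong_induction_on generalizing v with
  | _ n ih =>
    by_cases hvr : v = T.root
    · subst hvr
      exact root
    · exact step v hv hvr (ih _ (hn ▸ hd v hv hvr) (T.parent_mem v hv) rfl)

lemma iterate_parent_mem (hv : v ∈ T.verts) (i : ℕ) : T.parent^[i] v ∈ T.verts :=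
  Set.MapsTo.iterate T.parent_mem i hv

lemma iterate_parent_ne_root_of_le (hij : i ≤ j) (hj : T.parent^[j] v ≠ T.root) :
    T.parent^[i] v ≠ T.root := by
  intro hi
  obtain ⟨m, rfl⟩ := Nat.exists_eq_add_of_le' hij
  exact hj (by rw [Function.iterate_add_apply, hi, Function.iterate_fixed T.parent_root])

lemma isChild_iterate_parent (hv : v ∈ T.verts) (hi : T.parent^[i] v ≠ T.root) :
    T.IsChild (T.parent^[i + 1] v) (T.parent^[i] v) :=
  ⟨iterate_parent_mem hv i, hi, (Function.iterate_succ_apply' ..).symm⟩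

lemma isAncestor_refl (T : ParentTree G) (v : V) : T.IsAncestor v v := ⟨0, rfl⟩

lemma isAncestor_iff : T.IsAncestor w v ↔ w = v ∨ T.IsAncestor w (T.parent v) := by
  constructor
  · rintro ⟨_ | i, rfl⟩
    exacts [.inl rfl, .inr ⟨i, rfl⟩]
  · rintro (rfl | ⟨i, rfl⟩)
    exacts [T.isAncestor_refl _, ⟨i + 1, rfl⟩]

lemma IsAncestor.trans (huv : T.IsAncestor u v) (hvw : T.IsAncestor v w) : T.IsAncestor u w := by
  obtain ⟨i, rfl⟩ := huv
  obtain ⟨j, rfl⟩ := hvw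
  exact ⟨i + j, Function.iterate_add_apply ..⟩

lemma isAncestor_root_iff : T.IsAncestor w T.root ↔ w = T.root :=
  ⟨fun ⟨i, hi⟩ ↦ hi ▸ Function.iterate_fixed T.parent_root i, fun h ↦ h ▸ T.isAncestor_refl _⟩

lemma isAncestor_root (hv : v ∈ T.verts) : T.IsAncestor T.root v := by
  induction hv using induction_parent with
  | root => exact T.isAncestor_refl _
  | step v _ _ ih => exact isAncestor_iff.mpr (.inr ih)

lemma exists_isChild_root_isAncestor (hv : v ∈ T.verts) (hvr : v ≠ T.root) :
    ∃ c, T.IsChild T.root c ∧ T.IsAncestor c v := by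
  induction hv using induction_parent with
  | root => exact absurd rfl hvr
  | step v hv _ ih =>
    by_cases hp : T.parent v = T.root
    · exact ⟨v, ⟨hv, hvr, hp⟩, T.isAncestor_refl v⟩
    · exact (ih hp).imp fun c ↦ And.imp_right fun hc ↦ isAncestor_iff.mpr (.inr hc)

lemma not_isAncestor_parent (hv : v ∈ T.verts) (hvr : v ≠ T.root) :
    ¬ T.IsAncestor v (T.parent v) := by
  obtain ⟨d, hd⟩ := T.exists_rank
  have rank_le (i : ℕ) {w : V} (hw : w ∈ T.verts) : d (T.parent^[i] w) ≤ d w := by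
    induction i with
    | zero => rfl
    | succ i ih =>
      rw [Function.iterate_succ_apply']
      by_cases h : T.parent^[i] w = T.root
      · rwa [h, T.parent_root, ← h]
      · exact (hd _ (iterate_parent_mem hw i) h).le.trans ih
  rintro ⟨i, hi⟩
  have := rank_le i (T.parent_mem v hv)
  rw [hi] at this
  exact this.not_gt (hd v hv hvr)

lemma not_isAncestor_iterate_parent_succ (hv : v ∈ T.verts) (hi : T.parent^[i] v ≠ T.root) :
    ¬ T.IsAncestor (T.parent^[i] v) (T.parent^[i + 1] v) := by
  rw [Function.iterate_succ_apply']
  exact not_isAncestor_parent (iterate_parent_mem hv i) hi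

lemma iterate_parent_inj (hv : v ∈ T.verts) (hi : T.parent^[i] v ≠ T.root) :
    T.parent^[i] v = T.parent^[j] v ↔ i = j := by
  have ne_of_lt {i j : ℕ} (hij : i < j) (hi : T.parent^[i] v ≠ T.root) :
      T.parent^[j] v ≠ T.parent^[i] v := by
    obtain ⟨m, rfl⟩ := Nat.exists_eq_add_of_le' hij
    intro h
    rw [Function.iterate_add_apply, Function.iterate_succ_apply'] at h
    exact not_isAncestor_parent (iterate_parent_mem hv i) hi ⟨m, h⟩
  refine ⟨fun h ↦ ?_, fun h ↦ h ▸ rfl⟩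
  rcases lt_trichotomy i j with hij | hij | hij
  · exact absurd h.symm (ne_of_lt hij hi)
  · exact hij
  · exact absurd h (ne_of_lt hij (h ▸ hi))

lemma exists_isPath_root (hv : v ∈ T.verts) :
    ∃ q : G.Walk v T.root, q.IsPath ∧ ∀ w, w ∈ q.support ↔ T.IsAncestor w v := by
  induction hv using induction_parent with
  | root => exact ⟨.nil, .nil, fun w ↦ by simp [isAncestor_root_iff]⟩
  | step v hv hvr ih =>
    obtain ⟨q, hq, hmem⟩ := ih
    refine ⟨.cons (T.adj_parent v hv hvr) q, ?_, fun w ↦ ?_⟩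
    · exact hq.cons ((hmem v).not.mpr (not_isAncestor_parent hv hvr))
    · rw [Walk.support_cons, List.mem_cons, hmem, ← isAncestor_iff]

/-- The subgraph of `G` underlying a rooted tree. -/
def toSubgraph (T : ParentTree G) : G.Subgraph where
  verts := T.verts
  Adj a b := T.IsChild a b ∨ T.IsChild b a
  adj_sub := by
    rintro a b (⟨hb, hbr, rfl⟩ | ⟨ha, har, rfl⟩)
    exacts [(T.adj_parent b hb hbr).symm, T.adj_parent a ha har]
  edge_vert := by
    rintro a b (⟨hb, -, rfl⟩ | ⟨ha, -, -⟩)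
    exacts [T.parent_mem b hb, ha]
  symm := ⟨fun _ _ ↦ Or.symm⟩

@[simp] lemma verts_toSubgraph (T : ParentTree G) : T.toSubgraph.verts = T.verts := rfl

lemma connected_toSubgraph (T : ParentTree G) : T.toSubgraph.coe.Connected := by
  have reachable_root {v : V} (hv : v ∈ T.verts) :
      T.toSubgraph.coe.Reachable ⟨v, hv⟩ ⟨T.root, T.root_mem⟩ := by
    induction hv using induction_parent with
    | root => rfl
    | step v hv hvr ih => exact .trans (Adj.reachable (.inr (isChild_parent hv hvr))) ih
  rw [connected_iff_exists_forall_reachable]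
  exact ⟨⟨T.root, T.root_mem⟩, fun v ↦ (reachable_root v.2).symm⟩

lemma isAcyclic_toSubgraph (T : ParentTree G) : T.toSubgraph.coe.IsAcyclic := by
  classical
  intro a c hc
  obtain ⟨d, hd⟩ := T.exists_rank
  obtain ⟨u, hu, hmax⟩ := c.support.toFinset.exists_max_image (fun v ↦ d v)
    ⟨a, List.mem_toFinset.mpr c.start_mem_support⟩
  simp only [List.mem_toFinset] at hu hmax
  have eq_parent {b : T.toSubgraph.verts} (hb : b ∈ c.support) (hub : T.toSubgraph.Adj u b) :
      (b : V) = T.parent u := by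
    rcases hub with ⟨hbT, hbr, hbu⟩ | h
    · exact absurd (hbu ▸ hd b hbT hbr) (hmax b hb).not_gt
    · exact h.2.2.symm
  have hc' := hc.rotate hu
  have support_iff {b : T.toSubgraph.verts} : b ∈ (c.rotate u hu).support ↔ b ∈ c.support :=
    Walk.mem_support_rotate_iff ..
  refine hc'.snd_ne_penultimate (Subtype.ext ((eq_parent ?_ ?_).trans (eq_parent ?_ ?_).symm))
  · exact support_iff.mp (Walk.getVert_mem_support _ _)
  · exact Walk.adj_snd hc'.not_nil
  · exact support_iff.mp (Walk.getVert_mem_support _ _)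
  · exact (Walk.adj_penultimate hc'.not_nil).symm

lemma isTree_toSubgraph (T : ParentTree G) : T.toSubgraph.coe.IsTree :=
  ⟨T.connected_toSubgraph, T.isAcyclic_toSubgraph⟩

lemma exists_toSubgraph_eq_top (hG : G.IsTree) (r : V) :
    ∃ T : ParentTree G, T.toSubgraph = ⊤ ∧ T.root = r := by
  classical
  choose! p hp using fun v hv ↦ exists_adj_dist_lt hG.connected (u := r) (v := v) hv
  let T : ParentTree G :=
    { verts := Set.univ
      root := r
      parent := Function.update p r r
      root_mem := trivial
      parent_root := Function.update_self ..
      parent_mem := fun _ _ ↦ trivial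
      adj_parent := fun v _ hv ↦ by simpa only [Function.update_of_ne hv] using (hp v hv).1
      exists_rank := ⟨G.dist r, fun v _ hv ↦ by
        simpa only [Function.update_of_ne hv] using (hp v hv).2⟩ }
  have isChild_of_lt {a b : V} (hab : G.Adj a b) (hlt : G.dist r b < G.dist r a) :
      T.IsChild b a := by
    have har : a ≠ r := by
      rintro rfl
      simp only [dist_self, not_lt_zero] at hlt
    refine ⟨trivial, har, ?_⟩
    rw [show T.parent a = p a from Function.update_of_ne har ..]
    exact eq_of_adj_of_dist_lt hG (hp a har).1 hab (hp a har).2 hlt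
  refine ⟨T, eq_top_iff.mpr ⟨fun _ _ ↦ trivial, fun a b (hab : G.Adj a b) ↦ ?_⟩, rfl⟩
  exact (hG.dist_ne_of_adj r hab).lt_or_gt.imp (isChild_of_lt hab.symm) (isChild_of_lt hab)

lemma exists_toSubgraph_eq {H : G.Subgraph} (hH : H.coe.IsTree) {r : V} (hr : r ∈ H.verts) :
    ∃ T : ParentTree G, T.toSubgraph = H ∧ T.root = r := by
  obtain ⟨S, hS, hSr⟩ := exists_toSubgraph_eq_top hH ⟨r, hr⟩
  have mem_S (v : H.verts) : v ∈ S.verts := by simp [← verts_toSubgraph, hS]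
  have ne_root {v : V} (hv : v ∈ H.verts) (hvr : v ≠ r) : (⟨v, hv⟩ : H.verts) ≠ S.root :=
    fun h ↦ hvr (congrArg Subtype.val (h.trans hSr))
  obtain ⟨d, hd⟩ := S.exists_rank
  let parent (v : V) : V := open scoped Classical in
    if hv : v ∈ H.verts then S.parent ⟨v, hv⟩ else v
  have parent_coe (v : H.verts) : parent v = S.parent v := dif_pos v.2
  let T : ParentTree G :=
    { verts := H.verts
      root := r
      parent
      root_mem := hr
      parent_root := by rw [parent_coe ⟨r, hr⟩, ← hSr, S.parent_root, hSr]
      parent_mem := fun v hv ↦ parent_coe ⟨v, hv⟩ ▸ (S.parent ⟨v, hv⟩).2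
      adj_parent := fun v hv hvr ↦ parent_coe ⟨v, hv⟩ ▸
        H.adj_sub (S.adj_parent ⟨v, hv⟩ (mem_S _) (ne_root hv hvr))
      exists_rank := by
        refine ⟨Function.extend (↑) d 0, fun v hv hvr ↦ ?_⟩
        rw [parent_coe ⟨v, hv⟩, Subtype.val_injective.extend_apply,
          Subtype.val_injective.extend_apply d 0 ⟨v, hv⟩]
        exact hd _ (mem_S _) (ne_root hv hvr) }
  have isChild_iff {a b : H.verts} : T.IsChild a b ↔ S.IsChild a b := by
    refine and_congr (iff_of_true b.2 (mem_S b)) (and_congr (not_congr ?_) ?_)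
    · rw [hSr, Subtype.ext_iff]
    · exact (parent_coe b).congr_left.trans Subtype.ext_iff.symm
  have adj_iff {a b : V} (ha : a ∈ H.verts) (hb : b ∈ H.verts) :
      T.toSubgraph.Adj a b ↔ H.Adj a b := by
    refine (or_congr (isChild_iff (a := ⟨a, ha⟩) (b := ⟨b, hb⟩)) isChild_iff).trans
      (show S.toSubgraph.Adj ⟨a, ha⟩ ⟨b, hb⟩ ↔ _ from ?_)
    rw [hS]
    rfl
  exact ⟨T, Subgraph.ext rfl (funext₂ fun a b ↦ propext
    ⟨fun h ↦ (adj_iff h.fst_mem h.snd_mem).mp h, fun h ↦ (adj_iff h.fst_mem h.snd_mem).mpr h⟩), rfl⟩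

lemma IsChild.eq_iterate_parent {c : V} (hc : T.IsChild (T.parent^[n] v) c) (hv : v ∈ T.verts)
    (hcv : T.IsAncestor c v) (hn : T.parent^[n] v ≠ T.root) :
    ∃ j, j + 1 = n ∧ T.parent^[j] v = c := by
  obtain ⟨j, rfl⟩ := hcv
  refine ⟨j, ?_, rfl⟩
  rw [eq_comm, ← iterate_parent_inj hv hn, Function.iterate_succ_apply', hc.2.2]

lemma nontrivial_neighborSet_toSubgraph_iff (hv : v ∈ T.verts) :
    (T.toSubgraph.neighborSet v).Nontrivial ↔
      (v ≠ T.root ∧ ∃ c, T.IsChild v c) ∨ ∃ a b, a ≠ b ∧ T.IsChild v a ∧ T.IsChild v b := by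
  constructor
  · rintro ⟨a, ha, b, hb, hab⟩
    rcases ha with ha | ha <;> rcases hb with hb | hb
    · exact .inr ⟨a, b, hab, ha, hb⟩
    · exact .inl ⟨hb.2.1, a, ha⟩
    · exact .inl ⟨ha.2.1, b, hb⟩
    · exact absurd (ha.2.2.symm.trans hb.2.2) hab
  · rintro (⟨hvr, c, hc⟩ | ⟨a, b, hab, ha, hb⟩)
    · refine ⟨T.parent v, .inr (isChild_parent hv hvr), c, .inl hc, fun h ↦ ?_⟩
      exact not_isAncestor_parent hv hvr ⟨1, (congrArg T.parent h).trans hc.2.2⟩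
    · exact ⟨a, .inl ha, b, .inl hb, hab⟩

open scoped Classical in
/-- The tree obtained from `T` by making `u` the parent of `w`: if `w` is a vertex of `T`, the
subtree above `w` is moved to `u`, otherwise `w` becomes a new leaf. -/
noncomputable def hang (T : ParentTree G) (w u : V) (hw : w ≠ T.root) (hu : u ∈ T.verts)
    (hadj : G.Adj w u) (hwu : ¬ T.IsAncestor w u) : ParentTree G :=
  have parent_of_ne {v : V} (hv : v ≠ w) : Function.update T.parent w u v = T.parent v :=
    Function.update_of_ne hv ..
  { verts := insert w T.verts
    root := T.root
    parent := Function.update T.parent w u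
    root_mem := .inr T.root_mem
    parent_root := (parent_of_ne hw.symm).trans T.parent_root
    parent_mem := by
      intro v hv
      by_cases h : v = w
      · rw [h, Function.update_self]
        exact .inr hu
      · rw [parent_of_ne h]
        exact .inr (T.parent_mem v (hv.resolve_left h))
    adj_parent := by
      intro v hv hvr
      by_cases h : v = w
      · rwa [h, Function.update_self]
      · rw [parent_of_ne h]
        exact T.adj_parent v (hv.resolve_left h) hvr
    exists_rank := by
      obtain ⟨d, hd⟩ := T.exists_rank
      refine ⟨fun v ↦ if T.IsAncestor w v then d v + d u + 1 else d v, fun v hv hvr ↦ ?_⟩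
      by_cases h : v = w
      · simp only [h, Function.update_self, if_neg hwu, if_pos (T.isAncestor_refl w)]
        omega
      · have := hd v (hv.resolve_left h) hvr
        simp only [parent_of_ne h, T.isAncestor_iff (w := w) (v := v), Ne.symm h, false_or]
        split_ifs <;> omega }

section Hang

variable {hw : w ≠ T.root} {hu : u ∈ T.verts} {hadj : G.Adj w u} {hwu : ¬ T.IsAncestor w u}

@[simp] lemma verts_hang : (T.hang w u hw hu hadj hwu).verts = insert w T.verts := rfl

lemma isChild_hang_iff {c : V} :
    (T.hang w u hw hu hadj hwu).IsChild v c ↔ c = w ∧ v = u ∨ c ≠ w ∧ T.IsChild v c := by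
  by_cases h : c = w
  · subst h
    simp [IsChild, hang, hw, eq_comm]
  · simp [IsChild, hang, h]

lemma iterate_parent_hang (hv : ¬ T.IsAncestor w v) (i : ℕ) :
    (T.hang w u hw hu hadj hwu).parent^[i] v = T.parent^[i] v := by
  classical
  induction i with
  | zero => rfl
  | succ i ih =>
    rw [Function.iterate_succ_apply', Function.iterate_succ_apply', ih]
    exact Function.update_of_ne (fun h ↦ hv ⟨i, h⟩) ..

lemma isAncestor_hang_iff {a : V} (hv : ¬ T.IsAncestor w v) :
    (T.hang w u hw hu hadj hwu).IsAncestor a v ↔ T.IsAncestor a v :=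
  exists_congr fun i ↦ by rw [iterate_parent_hang hv]

lemma nontrivial_neighborSet_hang (hv : v ∈ T.verts) (hwv : ¬ T.IsChild v w)
    (h : (T.toSubgraph.neighborSet v).Nontrivial) :
    ((T.hang w u hw hu hadj hwu).toSubgraph.neighborSet v).Nontrivial := by
  have isChild_hang {c : V} (hc : T.IsChild v c) : (T.hang w u hw hu hadj hwu).IsChild v c :=
    isChild_hang_iff.mpr (.inr ⟨fun h ↦ hwv (h ▸ hc), hc⟩)
  rw [nontrivial_neighborSet_toSubgraph_iff hv] at h
  exact (nontrivial_neighborSet_toSubgraph_iff (Set.mem_insert_of_mem w hv)).mpr <|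
    h.imp (And.imp_right (Exists.imp fun _ ↦ isChild_hang))
      fun ⟨a, b, hab, ha, hb⟩ ↦ ⟨a, b, hab, isChild_hang ha, isChild_hang hb⟩

lemma nontrivial_neighborSet_hang_self (hT : T.verts.Nontrivial) (huw : ¬ T.IsChild u w) :
    ((T.hang w u hw hu hadj hwu).toSubgraph.neighborSet u).Nontrivial := by
  have isChild_w : (T.hang w u hw hu hadj hwu).IsChild u w := isChild_hang_iff.mpr (.inl ⟨rfl, rfl⟩)
  rw [nontrivial_neighborSet_toSubgraph_iff (Set.mem_insert_of_mem w hu)]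
  by_cases hur : u = T.root
  · obtain ⟨v, hv, hvr⟩ := hT.exists_ne T.root
    obtain ⟨c, hc, -⟩ := exists_isChild_root_isAncestor hv hvr
    rw [← hur] at hc
    exact .inr ⟨c, w, fun h ↦ huw (h ▸ hc),
      isChild_hang_iff.mpr (.inr ⟨fun h ↦ huw (h ▸ hc), hc⟩), isChild_w⟩
  · exact .inl ⟨hur, w, isChild_w⟩

end Hang

/-! ### Legs -/

/-- Some child of the `n`-th ancestor of `v` lies off the path from `v` to the root. -/
def HasSideChild (T : ParentTree G) (v : V) (n : ℕ) : Prop :=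
  ∃ c, T.IsChild (T.parent^[n] v) c ∧ ¬ T.IsAncestor c v

lemma hasSideChild_hang_iff {m : ℕ} (hv : v ∈ T.verts) {hw : T.parent^[i] v ≠ T.root}
    {hu : u ∈ T.verts} {hadj : G.Adj (T.parent^[i] v) u} {hwu : ¬ T.IsAncestor (T.parent^[i] v) u}
    (hm : T.parent^[m + (i + 1)] v ≠ T.root) (hum : T.parent^[m + (i + 1)] v ≠ u) :
    (T.hang _ u hw hu hadj hwu).HasSideChild (T.parent^[i + 1] v) m ↔
      T.HasSideChild v (m + (i + 1)) := by
  have hanc := not_isAncestor_iterate_parent_succ hv hw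
  unfold HasSideChild
  simp only [iterate_parent_hang hanc, isAncestor_hang_iff hanc, isChild_hang_iff,
    ← Function.iterate_add_apply, hum, and_false, false_or]
  refine exists_congr fun c ↦ ⟨fun ⟨⟨hci, hc⟩, hcv⟩ ↦ ⟨hc, fun hcv' ↦ ?_⟩,
    fun ⟨hc, hcv⟩ ↦ ⟨⟨?_, hc⟩, fun hcv' ↦ hcv (hcv'.trans ⟨i + 1, rfl⟩)⟩⟩
  · obtain ⟨j, hj, rfl⟩ := hc.eq_iterate_parent hv hcv' hm
    rcases m with _ | m
    · exact hci (by rw [show j = i by omega])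
    · exact hcv ⟨m, by rw [← Function.iterate_add_apply, show m + (i + 1) = j by omega]⟩
  · rintro rfl
    exact hcv ⟨i, rfl⟩

/-- The first `n` vertices on the path from `v` to the root form a leg of `T`: the path branches
for the first time at its vertex number `n` (counting from `0`), which is not the root. -/
structure IsLeg (T : ParentTree G) (v : V) (n : ℕ) : Prop where
  hasSideChild : T.HasSideChild v n
  not_hasSideChild : ∀ i < n, ¬ T.HasSideChild v i
  ne_root : T.parent^[n] v ≠ T.root

lemma exists_isLeg_or_forall_isAncestor (hv : v ∈ T.verts) (hvr : v ≠ T.root)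
    (hroot : ∀ a b, T.IsChild T.root a → T.IsChild T.root b → a = b) :
    (∃ n, T.IsLeg v n) ∨ ∀ s ∈ T.verts, T.IsAncestor s v := by
  classical
  by_cases h : ∃ n, T.HasSideChild v n ∧ T.parent^[n] v ≠ T.root
  · obtain ⟨hside, hne⟩ := Nat.find_spec h
    refine .inl ⟨_, hside, fun i hi hi' ↦ Nat.find_min h hi ⟨hi', ?_⟩, hne⟩
    exact iterate_parent_ne_root_of_le hi.le hne
  · push Not at h
    refine .inr fun s hs ↦ ?_
    induction hs using induction_parent with
    | root => exact isAncestor_root hv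
    | step s hs hsr ih =>
      by_cases hps : T.parent s = T.root
      · obtain ⟨c, hc, hcv⟩ := exists_isChild_root_isAncestor hv hvr
        rwa [hroot s c (hps ▸ isChild_parent hs hsr) hc]
      · obtain ⟨i, hi⟩ := ih
        by_contra hsv
        exact hps (hi ▸ h i ⟨s, hi ▸ isChild_parent hs hsr, hsv⟩)

namespace IsLeg

lemma exists_iterate_parent_of_isChild (h : T.IsLeg v n) (hv : v ∈ T.verts) (hi : i < n)
    (hw : T.IsChild (T.parent^[i] v) w) : ∃ j, j + 1 = i ∧ T.parent^[j] v = w :=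
  hw.eq_iterate_parent hv (not_not.mp fun hwv ↦ h.not_hasSideChild i hi ⟨w, hw, hwv⟩)
    (iterate_parent_ne_root_of_le hi.le h.ne_root)

lemma exists_iterate_parent_of_isAncestor (h : T.IsLeg v n) (hv : v ∈ T.verts) (hi : i < n)
    (hw : w ∈ T.verts) : T.IsAncestor (T.parent^[i] v) w → ∃ j ≤ i, T.parent^[j] v = w := by
  induction hw using induction_parent with
  | root => exact fun hw ↦ ⟨i, le_rfl, isAncestor_root_iff.mp hw⟩
  | step w hw hwr ih =>
    rw [isAncestor_iff]
    rintro (rfl | hiw)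
    · exact ⟨i, le_rfl, rfl⟩
    · obtain ⟨j, hji, hj⟩ := ih hiw
      obtain ⟨m, rfl, hm⟩ := h.exists_iterate_parent_of_isChild hv (hji.trans_lt hi)
        (hj ▸ isChild_parent hw hwr)
      exact ⟨m, by omega, hm⟩

lemma hang {m : ℕ} (h : T.IsLeg v (m + (i + 1))) (hv : v ∈ T.verts)
    {hw : T.parent^[i] v ≠ T.root} {hu : u ∈ T.verts} {hadj : G.Adj (T.parent^[i] v) u}
    {hwu : ¬ T.IsAncestor (T.parent^[i] v) u}
    (huv : ∀ j ≤ m, T.parent^[j + (i + 1)] v ≠ u) :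
    (T.hang _ u hw hu hadj hwu).IsLeg (T.parent^[i + 1] v) m := by
  have ne_root {j : ℕ} (hj : j ≤ m) : T.parent^[j + (i + 1)] v ≠ T.root :=
    iterate_parent_ne_root_of_le (by omega) h.ne_root
  have hanc := not_isAncestor_iterate_parent_succ hv hw
  constructor
  · exact (hasSideChild_hang_iff hv (ne_root le_rfl) (huv m le_rfl)).mpr h.hasSideChild
  · intro j hj
    rw [hasSideChild_hang_iff hv (ne_root hj.le) (huv j hj.le)]
    exact h.not_hasSideChild _ (by omega)
  · rw [iterate_parent_hang hanc, ← Function.iterate_add_apply]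
    exact ne_root le_rfl

/-- The tree left after the first `n` vertices on the path from `v` to the root, which form a leg,
are removed from `T`. -/
def prune (h : T.IsLeg v n) (hv : v ∈ T.verts) : ParentTree G where
  verts := {w ∈ T.verts | ∀ i < n, T.parent^[i] v ≠ w}
  root := T.root
  parent := T.parent
  root_mem := ⟨T.root_mem, fun _ hi ↦ iterate_parent_ne_root_of_le hi.le h.ne_root⟩
  parent_root := T.parent_root
  parent_mem w := by
    rintro ⟨hw, hwv⟩
    refine ⟨T.parent_mem w hw, fun i hi hiw ↦ ?_⟩
    by_cases hwr : w = T.root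
    · rw [hwr, T.parent_root] at hiw
      exact iterate_parent_ne_root_of_le hi.le h.ne_root hiw
    · obtain ⟨j, rfl, hj⟩ := h.exists_iterate_parent_of_isChild hv hi
        (hiw ▸ isChild_parent hw hwr)
      exact hwv j (by omega) hj
  adj_parent w hw := T.adj_parent w hw.1
  exists_rank := T.exists_rank.imp fun _ hd w hw ↦ hd w hw.1

lemma isChild_prune_iff (h : T.IsLeg v n) (hv : v ∈ T.verts) :
    (h.prune hv).IsChild u w ↔ T.IsChild u w ∧ ∀ i < n, T.parent^[i] v ≠ w :=
  and_right_comm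

lemma nontrivial_neighborSet_prune (h : T.IsLeg v n) (hv : v ∈ T.verts)
    (hw : w ∈ (h.prune hv).verts) (hwn : T.parent^[n] v ≠ w)
    (hnt : (T.toSubgraph.neighborSet w).Nontrivial) :
    ((h.prune hv).toSubgraph.neighborSet w).Nontrivial := by
  have isChild_prune {c : V} (hc : T.IsChild w c) : (h.prune hv).IsChild w c := by
    refine (h.isChild_prune_iff hv).mpr ⟨hc, fun i hi hic ↦ ?_⟩
    have hiw : T.parent^[i + 1] v = w := by rw [Function.iterate_succ_apply', hic, hc.2.2]
    rcases (Nat.succ_le_of_lt hi).lt_or_eq with hi | rfl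
    exacts [hw.2 _ hi hiw, hwn hiw]
  rw [nontrivial_neighborSet_toSubgraph_iff hw.1] at hnt
  exact (nontrivial_neighborSet_toSubgraph_iff hw).mpr <|
    hnt.imp (And.imp_right (Exists.imp fun _ ↦ isChild_prune))
      fun ⟨a, b, hab, ha, hb⟩ ↦ ⟨a, b, hab, isChild_prune ha, isChild_prune hb⟩

lemma nontrivial_neighborSet_prune_self (h : T.IsLeg v n) (hv : v ∈ T.verts) :
    ((h.prune hv).toSubgraph.neighborSet (T.parent^[n] v)).Nontrivial := by
  obtain ⟨c, hc, hcv⟩ := h.hasSideChild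
  have hmem : T.parent^[n] v ∈ (h.prune hv).verts := ⟨iterate_parent_mem hv n, fun i hi hin ↦
    hi.ne' ((iterate_parent_inj hv h.ne_root).mp hin.symm)⟩
  exact (nontrivial_neighborSet_toSubgraph_iff hmem).mpr
    (.inl ⟨h.ne_root, c, (h.isChild_prune_iff hv).mpr ⟨hc, fun i _ hi ↦ hcv ⟨i, hi⟩⟩⟩)

lemma ncard_verts_le_ncard_prune_add [Finite V] (h : T.IsLeg v n) (hv : v ∈ T.verts) :
    T.verts.ncard ≤ (h.prune hv).verts.ncard + n := by
  have hsub : T.verts ⊆ (h.prune hv).verts ∪ (fun i ↦ T.parent^[i] v) '' Set.Iio n := by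
    intro w hw
    by_cases hwv : ∃ i < n, T.parent^[i] v = w
    · exact .inr hwv
    · push Not at hwv
      exact .inl ⟨hw, hwv⟩
  refine (Set.ncard_le_ncard hsub).trans ((Set.ncard_union_le _ _).trans ?_)
  gcongr
  exact (Set.ncard_image_le (Set.finite_Iio n)).trans_eq (by simp)

end IsLeg

end ParentTree

/-! ### Critical trees -/

/-- `X` is an optimal set of end-vertices of a tree `H` in `G` that is too large to be `k`-ended.
Since `X` may contain vertices that are not leaves of `H`, the notion is stable under moving a
subtree (`IsCritical.hang`), where the leaves themselves are hard to control. -/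
structure IsCritical {G : SimpleGraph V} (H : G.Subgraph) (X : Set V) (k : ℕ) : Prop where
  isTree : H.coe.IsTree
  subset_verts : X ⊆ H.verts
  nontrivial_neighborSet : ∀ v ∈ H.verts, v ∉ X → (H.neighborSet v).Nontrivial
  ncard_le : X.ncard ≤ k + 1
  lt_ncard_verts : maxKEndedOrder G k < H.verts.ncard

namespace IsCritical

open ParentTree

variable [Finite V] {G : SimpleGraph V} {H : G.Subgraph} {T : ParentTree G} {X : Set V}
  {k n i : ℕ} {u v w x y z : V}

lemma ncard_eq (h : IsCritical H X k) : X.ncard = k + 1 := by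
  refine h.ncard_le.antisymm (Nat.succ_le_of_lt (Nat.lt_of_not_le fun hk ↦ ?_))
  exact h.lt_ncard_verts.not_ge
    (ncard_verts_le_maxKEndedOrder h.isTree h.nontrivial_neighborSet hk)

lemma ncard_sdiff_singleton (h : IsCritical H X k) (hv : v ∈ X) : (X \ {v}).ncard = k := by
  rw [Set.ncard_sdiff_singleton_of_mem hv, h.ncard_eq, Nat.add_sub_cancel]

lemma not_nontrivial_neighborSet (h : IsCritical H X k) (hv : v ∈ X) :
    ¬ (H.neighborSet v).Nontrivial := by
  refine fun hnt ↦ h.lt_ncard_verts.not_ge <| ncard_verts_le_maxKEndedOrder h.isTree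
    (fun w hw hwX ↦ ?_) (h.ncard_sdiff_singleton hv).le
  by_cases hwv : w = v
  · exact hwv ▸ hnt
  · exact h.nontrivial_neighborSet w hw fun hwX' ↦ hwX ⟨hwX', hwv⟩

lemma not_isChild (h : IsCritical T.toSubgraph X k) (hv : v ∈ X) (hvr : v ≠ T.root) :
    ¬ T.IsChild v w := fun hw ↦ h.not_nontrivial_neighborSet hv <|
  (nontrivial_neighborSet_toSubgraph_iff (h.subset_verts hv)).mpr (.inl ⟨hvr, w, hw⟩)

lemma eq_of_isChild_of_isChild (h : IsCritical T.toSubgraph X k) (hv : v ∈ X) {a b : V}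
    (ha : T.IsChild v a) (hb : T.IsChild v b) : a = b := by
  by_contra hab
  exact h.not_nontrivial_neighborSet hv <|
    (nontrivial_neighborSet_toSubgraph_iff (h.subset_verts hv)).mpr (.inr ⟨a, b, hab, ha, hb⟩)

lemma iterate_parent_notMem (h : IsCritical T.toSubgraph X k) (hv : v ∈ T.verts)
    (hi : T.parent^[i + 1] v ≠ T.root) : T.parent^[i + 1] v ∉ X := fun hX ↦
  h.not_isChild hX hi (isChild_iterate_parent hv (iterate_parent_ne_root_of_le i.le_succ hi))

lemma eq_of_isAncestor_of_isLeg (h : IsCritical T.toSubgraph X k) (hu : u ∈ X) (hv : v ∈ T.verts)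
    (hleg : T.IsLeg v n) (hi : i < n) (hanc : T.IsAncestor (T.parent^[i] v) u) : u = v := by
  obtain ⟨j, hji, rfl⟩ :=
    hleg.exists_iterate_parent_of_isAncestor hv hi (h.subset_verts hu) hanc
  rcases j with _ | j
  · rfl
  · exact absurd hu (h.iterate_parent_notMem hv
      (iterate_parent_ne_root_of_le (hji.trans hi.le) hleg.ne_root))

lemma hang (h : IsCritical T.toSubgraph X k) (hw : w ∈ T.verts) (hwr : w ≠ T.root)
    (hu : u ∈ X) (hadj : G.Adj w u) (hwu : ¬ T.IsAncestor w u) (huw : u ≠ T.parent w) :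
    IsCritical (T.hang w u hwr (h.subset_verts hu) hadj hwu).toSubgraph
      (insert (T.parent w) (X \ {u})) k where
  isTree := isTree_toSubgraph _
  subset_verts := (Set.insert_subset (T.parent_mem w hw)
    (Set.sdiff_subset.trans h.subset_verts)).trans (Set.subset_insert _ _)
  nontrivial_neighborSet v hv hvX := by
    have hvT : v ∈ T.verts := (Set.insert_eq_of_mem hw).subset hv
    by_cases hvu : v = u
    · subst hvu
      exact nontrivial_neighborSet_hang_self ⟨w, hw, T.root, T.root_mem, hwr⟩
        fun hc ↦ huw hc.2.2.symm
    · refine nontrivial_neighborSet_hang hvT (fun hc ↦ hvX (.inl hc.2.2.symm)) ?_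
      exact h.nontrivial_neighborSet v hvT fun hX ↦ hvX (.inr ⟨hX, hvu⟩)
  ncard_le := (Set.ncard_insert_le _ _).trans_eq (by rw [h.ncard_sdiff_singleton hu])
  lt_ncard_verts := h.lt_ncard_verts.trans_eq (congrArg _ (Set.insert_eq_of_mem hw).symm)

lemma ncard_verts_le_add_of_isLeg (h : IsCritical T.toSubgraph X k) (hv : v ∈ X)
    (hleg : T.IsLeg v n) : T.verts.ncard ≤ maxKEndedOrder G k + n := by
  have hvT : v ∈ T.verts := h.subset_verts hv
  refine (hleg.ncard_verts_le_ncard_prune_add hvT).trans (Nat.add_le_add_right ?_ n)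
  refine ncard_verts_le_maxKEndedOrder (isTree_toSubgraph (hleg.prune hvT)) (fun w hw hwX ↦ ?_)
    (h.ncard_sdiff_singleton hv).le
  by_cases hwn : T.parent^[n] v = w
  · exact hwn ▸ hleg.nontrivial_neighborSet_prune_self hvT
  · refine hleg.nontrivial_neighborSet_prune hvT hw hwn (h.nontrivial_neighborSet w hw.1 ?_)
    refine fun hwX' ↦ hwX ⟨hwX', ?_⟩
    rintro rfl
    rcases n.eq_zero_or_pos with rfl | hn
    exacts [hwn rfl, hw.2 0 hn rfl]

lemma exists_isLeg_of_adj {m : ℕ} (h : IsCritical T.toSubgraph X k) (hv : v ∈ X) (hu : u ∈ X)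
    (huv : u ≠ v) (hleg : T.IsLeg v (m + (i + 1))) (hadj : G.Adj (T.parent^[i] v) u) :
    ∃ T' : ParentTree G, T'.verts = T.verts ∧ T'.IsLeg (T.parent^[i + 1] v) m ∧
      IsCritical T'.toSubgraph (insert (T.parent^[i + 1] v) (X \ {u})) k := by
  have hvT : v ∈ T.verts := h.subset_verts hv
  have ne_root {j : ℕ} (hj : j ≤ m + (i + 1)) : T.parent^[j] v ≠ T.root :=
    iterate_parent_ne_root_of_le hj hleg.ne_root
  have iterate_ne {j : ℕ} (hj : j ≤ m) : T.parent^[j + (i + 1)] v ≠ u := fun hju ↦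
    h.iterate_parent_notMem (i := j + i) hvT (ne_root (by omega)) (hju.symm ▸ hu)
  have hwu : ¬ T.IsAncestor (T.parent^[i] v) u := fun hanc ↦
    huv (h.eq_of_isAncestor_of_isLeg hu hvT hleg (by omega) hanc)
  have hwr : T.parent^[i] v ≠ T.root := ne_root (by omega)
  have hparent : T.parent (T.parent^[i] v) = T.parent^[i + 1] v :=
    (Function.iterate_succ_apply' ..).symm
  refine ⟨T.hang _ u hwr (h.subset_verts hu) hadj hwu,
    Set.insert_eq_of_mem (iterate_parent_mem hvT i), hleg.hang hvT fun j ↦ iterate_ne, ?_⟩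
  rw [← hparent]
  refine h.hang (iterate_parent_mem hvT i) hwr hu hadj hwu ?_
  rw [hparent]
  simpa [eq_comm] using iterate_ne m.zero_le

lemma not_adj_of_isLeg (h : IsCritical T.toSubgraph X k) (hu : u ∈ X) (hv : v ∈ X) (huv : u ≠ v)
    (hleg : T.IsLeg v n) : ¬ G.Adj v u := by
  intro hadj
  induction n generalizing T X u v with
  | zero =>
    obtain ⟨c, hc, -⟩ := hleg.hasSideChild
    exact h.not_isChild hv hleg.ne_root hc
  | succ n ih =>
    have hvT : v ∈ T.verts := h.subset_verts hv
    have hvr : v ≠ T.root := iterate_parent_ne_root_of_le (i := 0) (Nat.zero_le _) hleg.ne_root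
    obtain ⟨T', -, hleg', h'⟩ := h.exists_isLeg_of_adj (i := 0) hv hu huv hleg hadj
    have hvp : G.Adj v (T.parent v) := T.adj_parent v hvT hvr
    exact ih h' (.inr ⟨hv, huv.symm⟩) (.inl rfl) hvp.ne hleg' hvp.symm

lemma not_adj (h : IsCritical H X k) (hk : 1 ≤ k) (hu : u ∈ X) (hv : v ∈ X) : ¬ G.Adj v u := by
  intro hadj
  obtain ⟨T, rfl, rfl⟩ := exists_toSubgraph_eq h.isTree (h.subset_verts hu)
  have hvT : v ∈ T.verts := h.subset_verts hv
  rcases exists_isLeg_or_forall_isAncestor hvT hadj.ne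
    (fun a b ↦ h.eq_of_isChild_of_isChild hu) with ⟨n, hleg⟩ | hanc
  · exact h.not_adj_of_isLeg hu hv hadj.ne' hleg hadj
  · obtain ⟨q, hq, hmem⟩ := exists_isPath_root hvT
    refine h.lt_ncard_verts.not_ge (le_trans ?_ (ncard_support_le_maxKEndedOrder hk hq hadj.symm))
    exact Set.ncard_le_ncard fun w hw ↦ (hmem w).mpr (hanc w hw)

lemma add_le_of_adj_of_isLeg (h : IsCritical T.toSubgraph X k) (hv : v ∈ X) (hu : u ∈ X)
    (huv : u ≠ v) (hleg : T.IsLeg v n) (hi : i < n) (hadj : G.Adj (T.parent^[i] v) u) :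
    T.verts.ncard + (i + 1) ≤ maxKEndedOrder G k + n := by
  obtain ⟨m, rfl⟩ := Nat.exists_eq_add_of_le' (Nat.succ_le_of_lt hi)
  obtain ⟨T', hverts, hleg', h'⟩ := h.exists_isLeg_of_adj hv hu huv hleg hadj
  have := h'.ncard_verts_le_add_of_isLeg (.inl rfl) hleg'
  rw [hverts] at this
  omega

lemma mem_verts_of_adj (h : IsCritical H X k) (hk : 1 ≤ k)
    (hmax : maxKEndedOrder G (k + 1) ≤ H.verts.ncard) (hu : u ∈ X) (hadj : G.Adj u w) :
    w ∈ H.verts := by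
  by_contra hw
  obtain ⟨T, rfl, -⟩ := exists_toSubgraph_eq h.isTree (h.subset_verts hu)
  rw [verts_toSubgraph] at hw hmax
  have huT : u ∈ T.verts := h.subset_verts hu
  have hwr : w ≠ T.root := fun hwr ↦ hw (hwr ▸ T.root_mem)
  have hwu : ¬ T.IsAncestor w u := by
    rintro ⟨i, rfl⟩
    exact hw (iterate_parent_mem huT i)
  have hX : X.Nontrivial := by
    rw [← Set.one_lt_ncard_iff_nontrivial, h.ncard_eq]
    omega
  let T' := T.hang w u hwr huT hadj.symm hwu
  have hle : T'.verts.ncard ≤ maxKEndedOrder G (k + 1) := by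
    refine ncard_verts_le_maxKEndedOrder (X := insert w (X \ {u})) (isTree_toSubgraph T')
      (fun v hv hvX ↦ ?_) ((Set.ncard_insert_le _ _).trans_eq (by rw [h.ncard_sdiff_singleton hu]))
    have hvT : v ∈ T.verts := hv.resolve_left fun hvw ↦ hvX (.inl hvw)
    by_cases hvu : v = u
    · subst hvu
      exact nontrivial_neighborSet_hang_self (hX.mono h.subset_verts) fun hc ↦ hw hc.1
    · refine nontrivial_neighborSet_hang hvT (fun hc ↦ hw hc.1) ?_
      exact h.nontrivial_neighborSet v hvT fun hX ↦ hvX (.inr ⟨hX, hvu⟩)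
  rw [verts_hang, Set.ncard_insert_of_notMem hw] at hle
  exact absurd (hle.trans hmax) (Nat.not_succ_le_self _)

lemma hang_root (h : IsCritical T.toSubgraph X k) (hx : T.root ∈ X) (hw : w ∈ T.verts)
    (hadj : G.Adj T.root w) (hpw : T.parent w ≠ T.root) :
    IsCritical (T.hang w T.root hadj.ne' T.root_mem hadj.symm
      (isAncestor_root_iff.not.mpr hadj.ne')).toSubgraph
      (insert (T.parent w) (X \ {T.root})) k :=
  h.hang hw hadj.ne' hx hadj.symm (isAncestor_root_iff.not.mpr hadj.ne') hpw.symm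

lemma eq_of_isChild_parent (h : IsCritical T.toSubgraph X k) (hx : T.root ∈ X) (hw : w ∈ T.verts)
    (hadj : G.Adj T.root w) {c : V} (hc : T.IsChild (T.parent w) c) : c = w := by
  by_cases hpw : T.parent w = T.root
  · exact h.eq_of_isChild_of_isChild hx (hpw ▸ hc) (hpw ▸ isChild_parent hw hadj.ne')
  · by_contra hcw
    exact (h.hang_root hx hw hadj hpw).not_isChild (.inl rfl) hpw
      (isChild_hang_iff.mpr (.inr ⟨hcw, hc⟩))

lemma not_adj_parent (h : IsCritical T.toSubgraph X k) (hk : 1 ≤ k) (hx : T.root ∈ X)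
    (hw : w ∈ T.verts) (hadj : G.Adj T.root w) (hy : y ∈ X) (hyx : y ≠ T.root) :
    ¬ G.Adj y (T.parent w) := by
  by_cases hpw : T.parent w = T.root
  · exact hpw ▸ h.not_adj hk hx hy
  · exact (h.hang_root hx hw hadj hpw).not_adj hk (.inl rfl) (.inr ⟨hy, hyx⟩)

lemma exists_isLeg (h : IsCritical T.toSubgraph X k) (hx : T.root ∈ X) (hy : y ∈ X)
    (hyx : y ≠ T.root) (hz : z ∈ X) (hzx : z ≠ T.root) (hzy : z ≠ y) : ∃ n, T.IsLeg z n := by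
  have hzT : z ∈ T.verts := h.subset_verts hz
  refine (exists_isLeg_or_forall_isAncestor hzT hzx
    fun a b ↦ h.eq_of_isChild_of_isChild hx).resolve_right fun hanc ↦ ?_
  obtain ⟨_ | i, rfl⟩ := hanc y (h.subset_verts hy)
  exacts [hzy rfl, h.iterate_parent_notMem hzT hyx hy]

lemma parent_ne_of_isLeg {l : ℕ} (h : IsCritical T.toSubgraph X k) (hx : T.root ∈ X) (hz : z ∈ X)
    (hzx : z ≠ T.root) (hleg : T.IsLeg z n) (hl : maxKEndedOrder G k + l ≤ T.verts.ncard)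
    (hi : i < n) (hil : i = 0 ∨ n < i + l) (hw : w ∈ T.verts) (hadj : G.Adj T.root w) :
    T.parent w ≠ T.parent^[i] z := by
  intro hpw
  obtain ⟨j, rfl, rfl⟩ := hleg.exists_iterate_parent_of_isChild (h.subset_verts hz) hi
    (hpw ▸ isChild_parent hw hadj.ne')
  have := h.add_le_of_adj_of_isLeg hz hx hzx.symm hleg (Nat.lt_of_succ_lt hi) hadj.symm
  omega

lemma exists_finset_subset_leg {l : ℕ} (h : IsCritical T.toSubgraph X k) (hk : 1 ≤ k)
    (hl : maxKEndedOrder G k + l ≤ T.verts.ncard) (hx : T.root ∈ X) (hy : y ∈ X)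
    (hyx : y ≠ T.root) (hz : z ∈ X) (hzx : z ≠ T.root) (hzy : z ≠ y) :
    ∃ B : Finset V, l ≤ B.card ∧ ∀ b ∈ B, T.IsAncestor b z ∧
      (∀ z' ∈ X, T.IsAncestor b z' → z' = z) ∧ ¬ G.Adj y b ∧
      ∀ w ∈ T.verts, G.Adj T.root w → T.parent w ≠ b := by
  classical
  have hzT : z ∈ T.verts := h.subset_verts hz
  obtain ⟨n, hleg⟩ := h.exists_isLeg hx hy hyx hz hzx hzy
  have hn : maxKEndedOrder G k + l ≤ maxKEndedOrder G k + n :=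
    hl.trans (h.ncard_verts_le_add_of_isLeg hz hleg)
  have hn_pos : 0 < n := by
    have := h.lt_ncard_verts.trans_le (h.ncard_verts_le_add_of_isLeg hz hleg)
    omega
  -- the end `z` and the `l - 1` vertices of its leg that are closest to the branching vertex
  let I : Finset ℕ := insert 0 (Finset.Ico (n + 1 - l) n)
  have hI {i : ℕ} (hi : i ∈ I) : i < n ∧ (i = 0 ∨ n < i + l) := by
    simp only [I, Finset.mem_insert, Finset.mem_Ico] at hi
    omega
  have injOn : Set.InjOn (fun i ↦ T.parent^[i] z) I := fun i hi j _ ↦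
    (iterate_parent_inj hzT (iterate_parent_ne_root_of_le (hI hi).1.le hleg.ne_root)).mp
  refine ⟨I.image fun i ↦ T.parent^[i] z, ?_, fun b hb ↦ ?_⟩
  · rw [Finset.card_image_of_injOn injOn, Finset.card_insert_of_notMem (by simp; omega),
      Nat.card_Ico]
    omega
  · obtain ⟨i, hi, rfl⟩ := Finset.mem_image.mp hb
    obtain ⟨hin, hil⟩ := hI hi
    refine ⟨⟨i, rfl⟩, fun z' hz' ↦ h.eq_of_isAncestor_of_isLeg hz' hzT hleg hin, fun hadj ↦ ?_,
      fun w hw ↦ h.parent_ne_of_isLeg hx hz hzx hleg hl hin hil hw⟩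
    rcases hil with rfl | hil
    · exact h.not_adj hk hz hy hadj
    · have := h.add_le_of_adj_of_isLeg hz hy hzy.symm hleg hin hadj.symm
      omega

lemma exists_finset_legs {l : ℕ} (h : IsCritical T.toSubgraph X k) (hk : 1 ≤ k)
    (hl : maxKEndedOrder G k + l ≤ T.verts.ncard) (hx : T.root ∈ X) (hy : y ∈ X)
    (hyx : y ≠ T.root) :
    ∃ B : Finset V, l * (k - 1) ≤ B.card ∧ ∀ b ∈ B, b ∈ T.verts ∧ b ≠ y ∧ ¬ G.Adj y b ∧
      ∀ w ∈ T.verts, G.Adj T.root w → T.parent w ≠ b := by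
  classical
  let Z : Finset V := (Set.toFinite (X \ {T.root, y})).toFinset
  have hZ {z : V} : z ∈ Z ↔ z ∈ X ∧ z ≠ T.root ∧ z ≠ y := by simp [Z]
  have card_Z : Z.card = k - 1 := by
    rw [← Set.ncard_eq_toFinset_card, Set.ncard_sdiff (by simp [Set.insert_subset_iff, hx, hy]),
      h.ncard_eq, Set.ncard_pair hyx.symm]
    omega
  have exists_leg (z : V) (hz : z ∈ Z) := h.exists_finset_subset_leg hk hl hx hy hyx
    (hZ.mp hz).1 (hZ.mp hz).2.1 (hZ.mp hz).2.2
  choose! leg le_card_leg hleg using exists_leg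
  refine ⟨Z.biUnion leg, ?_, fun b hb ↦ ?_⟩
  · rw [Finset.card_biUnion fun z hz z' hz' hne ↦ Finset.disjoint_left.mpr fun b hb hb' ↦ hne
      ((hleg z' hz' b hb').2.1 z (hZ.mp hz).1 (hleg z hz b hb).1), ← card_Z, mul_comm]
    exact Z.card_nsmul_le_sum _ _ le_card_leg
  · obtain ⟨z, hz, hbz⟩ := Finset.mem_biUnion.mp hb
    obtain ⟨hzX, -, hzy⟩ := hZ.mp hz
    obtain ⟨⟨i, rfl⟩, eq_of_isAncestor, hyb, hpb⟩ := hleg z hz b hbz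
    refine ⟨iterate_parent_mem (h.subset_verts hzX) i, fun hby ↦ hzy.symm ?_, hyb, hpb⟩
    exact eq_of_isAncestor y hy (hby ▸ T.isAncestor_refl y)

lemma exists_finset_parents [Fintype V] [DecidableRel G.Adj] (h : IsCritical T.toSubgraph X k)
    (hk : 1 ≤ k) (hmax : maxKEndedOrder G (k + 1) ≤ T.verts.ncard) (hx : T.root ∈ X)
    (hy : y ∈ X) (hyx : y ≠ T.root) :
    ∃ A : Finset V, A.card = G.degree T.root ∧ ∀ a ∈ A, a ≠ y ∧ ¬ G.Adj y a ∧
      ∃ w ∈ T.verts, G.Adj T.root w ∧ T.parent w = a := by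
  classical
  have mem_verts {w : V} (hw : G.Adj T.root w) : w ∈ T.verts := h.mem_verts_of_adj hk hmax hx hw
  refine ⟨(G.neighborFinset T.root).image T.parent, ?_, fun a ha ↦ ?_⟩
  · refine Finset.card_image_of_injOn fun w hw w' hw' hp ↦ ?_
    rw [Finset.mem_coe, mem_neighborFinset] at hw hw'
    exact h.eq_of_isChild_parent hx (mem_verts hw') hw'
      (hp ▸ isChild_parent (mem_verts hw) hw.ne')
  · simp only [Finset.mem_image, mem_neighborFinset] at ha
    obtain ⟨w, hw, rfl⟩ := ha
    have hwT := mem_verts hw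
    exact ⟨fun hpy ↦ h.not_isChild hy hyx ⟨hwT, hw.ne', hpy⟩,
      h.not_adj_parent hk hx hwT hw hy hyx, w, hwT, hw, rfl⟩

lemma degree_add_degree_add_lt [Fintype V] [DecidableRel G.Adj] {l : ℕ} (h : IsCritical H X k)
    (hk : 1 ≤ k) (hmax : maxKEndedOrder G (k + 1) ≤ H.verts.ncard)
    (hl : maxKEndedOrder G k + l ≤ H.verts.ncard) (hx : x ∈ X) (hy : y ∈ X) (hyx : y ≠ x) :
    G.degree x + G.degree y + l * (k - 1) < H.verts.ncard := by
  classical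
  obtain ⟨T, rfl, rfl⟩ := exists_toSubgraph_eq h.isTree (h.subset_verts hx)
  obtain ⟨A, card_A, hA⟩ := h.exists_finset_parents hk hmax hx hy hyx
  obtain ⟨B, card_B, hB⟩ := h.exists_finset_legs hk hl hx hy hyx
  have disjoint_A : Disjoint A (G.neighborFinset y) :=
    Finset.disjoint_left.mpr fun a ha ha' ↦ (hA a ha).2.1 ((mem_neighborFinset ..).mp ha')
  have disjoint_B : Disjoint (A ∪ G.neighborFinset y) B := by
    refine Finset.disjoint_left.mpr fun b hb hbB ↦ ?_
    obtain ⟨-, -, hyb, hpb⟩ := hB b hbB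
    rcases Finset.mem_union.mp hb with hb | hb
    · obtain ⟨-, -, w, hwT, hw, hwb⟩ := hA b hb
      exact hpb w hwT hw hwb
    · exact hyb ((mem_neighborFinset ..).mp hb)
  have union_subset : (↑(A ∪ G.neighborFinset y ∪ B) : Set V) ⊆ T.verts \ {y} := by
    intro b hb
    simp only [Finset.coe_union, Set.mem_union, Finset.mem_coe, mem_neighborFinset] at hb
    rcases hb with (hb | hb) | hb
    · obtain ⟨hby, -, w, hwT, -, rfl⟩ := hA b hb
      exact ⟨T.parent_mem w hwT, hby⟩
    · exact ⟨h.mem_verts_of_adj hk hmax hy hb, hb.ne'⟩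
    · exact ⟨(hB b hb).1, (hB b hb).2.1⟩
  calc G.degree T.root + G.degree y + l * (k - 1)
      ≤ A.card + (G.neighborFinset y).card + B.card := by
        rw [card_A, card_neighborFinset_eq_degree]
        gcongr
    _ = (↑(A ∪ G.neighborFinset y ∪ B) : Set V).ncard := by
        rw [Set.ncard_coe_finset, Finset.card_union_of_disjoint disjoint_B,
          Finset.card_union_of_disjoint disjoint_A]
    _ ≤ (T.verts \ {y}).ncard := Set.ncard_le_ncard union_subset
    _ < T.verts.ncard := Set.ncard_sdiff_singleton_lt_of_mem (h.subset_verts hy)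

end IsCritical

lemma exists_isCritical [Finite V] {G : SimpleGraph V} {k : ℕ} (hk : 1 ≤ k)
    (hlt : maxKEndedOrder G k < maxKEndedOrder G (k + 1)) :
    ∃ (H : G.Subgraph) (X : Set V),
      IsCritical H X k ∧ H.verts.ncard = maxKEndedOrder G (k + 1) := by
  obtain ⟨H, hH, card_H⟩ : maxKEndedOrder G (k + 1) ∈
      {n | ∃ H : G.Subgraph, IsKEndedTree G (k + 1) H ∧ H.verts.ncard = n} := by
    refine Nat.sSup_mem (Set.nonempty_iff_ne_empty.mpr fun h ↦ ?_)
      ⟨Nat.card V, by rintro _ ⟨H, -, rfl⟩; exact Set.ncard_le_card _⟩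
    simp [maxKEndedOrder, h] at hlt
  have not_isKEndedTree : ¬ IsKEndedTree G k H := fun hHk ↦
    hlt.not_ge (card_H ▸ hHk.ncard_verts_le)
  obtain ⟨hT, hends⟩ := hH.resolve_right fun hc ↦ not_isKEndedTree (.inr ⟨hk, hc.2⟩)
  have lt_ends : k < endVertexCount H := Nat.lt_of_not_le fun hle ↦
    not_isKEndedTree (.inl ⟨hT, hle⟩)
  have nontrivial_verts : H.verts.Nontrivial :=
    (Set.one_lt_ncard_iff_nontrivial.mp (hk.trans_lt lt_ends)).mono fun v hv ↦ hv.1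
  refine ⟨H, {v | v ∈ H.verts ∧ (H.neighborSet v).ncard = 1}, ⟨hT, fun v hv ↦ hv.1,
    fun v hv hvX ↦ ?_, hends, card_H ▸ hlt⟩, card_H⟩
  have : Nontrivial H.verts := nontrivial_verts.coe_sort
  obtain ⟨w, hvw⟩ := hT.connected.preconnected.exists_adj_of_nontrivial ⟨v, hv⟩
  rw [← Set.one_lt_ncard_iff_nontrivial]
  have neighborSet_pos : 0 < (H.neighborSet v).ncard := (Set.ncard_pos).mpr ⟨w, hvw⟩
  have ncard_ne_one : (H.neighborSet v).ncard ≠ 1 := fun h ↦ hvX ⟨hv, h⟩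
  omega

lemma minDegreeSum_two_le [Fintype V] (G : SimpleGraph V) [DecidableRel G.Adj] {x y : V}
    (hne : x ≠ y) (hadj : ¬ G.Adj x y) :
    minDegreeSum G 2 ≤ ((G.degree x + G.degree y : ℕ) : ℕ∞) := by
  classical
  have isIndSet_pair : IsIndSet G ↑({x, y} : Finset V) := by
    simp only [IsIndSet, Finset.coe_pair, Set.mem_insert_iff, Set.mem_singleton_iff]
    rintro u (rfl | rfl) v (rfl | rfl)
    exacts [G.irrefl, hadj, fun h ↦ hadj h.symm, G.irrefl]
  refine (iInf₂_le {x, y} ⟨Finset.card_pair hne, isIndSet_pair⟩).trans_eq ?_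
  rw [Finset.sum_pair hne, Nat.cast_add]

theorem corollary5_general [Fintype V] (G : SimpleGraph V) [DecidableRel G.Adj] (k l : ℕ)
    (hk : 1 ≤ k) (hl : 1 ≤ l)
    (h : (maxKEndedOrder G (k + 1) : ℕ∞) ≤
      minDegreeSum G 2 + ((l * (k - 1) : ℕ) : ℕ∞)) :
    maxKEndedOrder G k + l ≥ maxKEndedOrder G (k + 1) + 1 := by
  by_contra! hlt
  obtain ⟨H, X, hH, card_H⟩ := exists_isCritical (G := G) hk (by omega)
  obtain ⟨x, hx, y, hy, hxy⟩ : X.Nontrivial := by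
    rw [← Set.one_lt_ncard_iff_nontrivial, hH.ncard_eq]
    omega
  have degree_sum_lt := hH.degree_add_degree_add_lt (l := l) hk card_H.ge (by omega) hx hy hxy.symm
  have degree_sum_ge :=
    h.trans (add_le_add_left (minDegreeSum_two_le G hxy (hH.not_adj hk hy hx)) _)
  rw [← Nat.cast_add, Nat.cast_le] at degree_sum_ge
  omega

/-- **Corollary 5.** If `G` is connected and `σ_2 ≥ t_{k+1} - λ(k - 1)` for some
positive integers `λ, k`, then `t_k ≥ t_{k+1} - λ + 1`. -/
theorem corollary5 [Fintype V] (G : SimpleGraph V) [DecidableRel G.Adj]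
    (hG : G.Connected) (k l : ℕ) (hk : 1 ≤ k) (hl : 1 ≤ l)
    (h : (maxKEndedOrder G (k + 1) : ℕ∞) ≤
      minDegreeSum G 2 + ((l * (k - 1) : ℕ) : ℕ∞)) :
    maxKEndedOrder G k + l ≥ maxKEndedOrder G (k + 1) + 1 :=
  corollary5_general G k l hk hl h
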